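/- Let q⁰, q¹, …, qᵐ be pairwise mutually singular probability measures on a measurable space X and b ∈ ℝᵐ. Then for every λ ∈ ℝ₊ᵐ with λᵢ > 0 for all i, the dual function satisfies the closed form g(λ) = inf over probability measures p of [KL(q⁰‖p) + Σᵢ λᵢ (KL(qⁱ‖p) − bᵢ)] = (1 + Σᵢ λᵢ) log(1 + Σᵢ λᵢ) − Σᵢ λᵢ log λᵢ − Σᵢ λᵢ bᵢ, and the infimum is attained at the mixture q_mix^{(λ)} = (q⁰ + Σᵢ λᵢ qⁱ)/(1 + Σᵢ λᵢ). -/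

import Mathlib

open MeasureTheory

/-- The Kullback–Leibler divergence `KL(μ‖ν)`, with values in `EReal`. -/
noncomputable def KL {X : Type*} [MeasurableSpace X] (μ ν : Measure X) : EReal :=
  open Classical in
  if μ ≪ ν ∧ Integrable (llr μ ν) μ then ((∫ x, llr μ ν x ∂μ : ℝ) : EReal) else ⊤

/-- The Lagrangian `L(p, λ) = KL(q⁰‖p) + ∑ i, λ i * (KL(qⁱ‖p) − b i)`. -/
noncomputable def Lagrangian {X : Type*} [MeasurableSpace X] {m : ℕ}
    (q0 : Measure X) (qi : Fin m → Measure X) (b : Fin m → ℝ)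
    (p : Measure X) (l : Fin m → ℝ) : EReal :=
  KL q0 p + ∑ i, (l i : EReal) * (KL (qi i) p - (b i : EReal))

/-- The dual function `g(λ) = inf over probability measures p of L(p, λ)`. -/
noncomputable def dualFn {X : Type*} [MeasurableSpace X] {m : ℕ}
    (q0 : Measure X) (qi : Fin m → Measure X) (b : Fin m → ℝ) (l : Fin m → ℝ) : EReal :=
  ⨅ p : {p : Measure X // IsProbabilityMeasure p}, Lagrangian q0 qi b p.1 l

/-- The mixture distribution `q_mix^{(λ)} = (q⁰ + ∑ i, λ i • qⁱ) / (1 + ∑ i, λ i)`. -/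
noncomputable def qMix {X : Type*} [MeasurableSpace X] {m : ℕ}
    (q0 : Measure X) (qi : Fin m → Measure X) (l : Fin m → ℝ) : Measure X :=
  (ENNReal.ofReal (1 + ∑ i, l i))⁻¹ • (q0 + ∑ i, ENNReal.ofReal (l i) • qi i)

/-!
For a fixed reference measure `p`, the functional `KL · p` is additive on mutually singular measures
and satisfies `KL (c • μ) p = c * KL μ p + c * log c * μ(X)`. Writing `S = 1 + ∑ λᵢ`, so that
`q⁰ + ∑ λᵢ • qⁱ = S • q_mix`, both rules together turn the Lagrangian at every `p` into
`S * KL q_mix p` plus the claimed closed form. As `S > 0`, it is minimal where `KL q_mix p = 0`,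
that is, at `p = q_mix`.
-/

section KL

variable {X : Type*} [MeasurableSpace X] {μ ν p : Measure X}

lemma KL_of_ac_of_integrable (hac : μ ≪ p) (hint : Integrable (llr μ p) μ) :
    KL μ p = (∫ x, llr μ p x ∂μ : ℝ) :=
  if_pos ⟨hac, hint⟩

lemma KL_of_not_ac_and_integrable (h : ¬(μ ≪ p ∧ Integrable (llr μ p) μ)) : KL μ p = ⊤ :=
  if_neg h

lemma KL_ne_bot (μ p : Measure X) : KL μ p ≠ ⊥ := by
  by_cases h : μ ≪ p ∧ Integrable (llr μ p) μ
  · rw [KL_of_ac_of_integrable h.1 h.2]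
    exact EReal.coe_ne_bot _
  · rw [KL_of_not_ac_and_integrable h]
    exact top_ne_bot

lemma KL_zero_left (p : Measure X) : KL 0 p = 0 := by
  rw [KL_of_ac_of_integrable (Measure.AbsolutelyContinuous.zero p) integrable_zero_measure,
    integral_zero_measure, EReal.coe_zero]

lemma KL_self (μ : Measure X) [SigmaFinite μ] : KL μ μ = 0 := by
  have hllr : llr μ μ =ᵐ[μ] 0 := llr_self μ
  rw [KL_of_ac_of_integrable .rfl ((integrable_zero X ℝ μ).congr hllr.symm),
    integral_congr_ae hllr, Pi.zero_def, integral_zero, EReal.coe_zero]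

lemma KL_nonneg_of_measureReal_univ_le [IsFiniteMeasure μ] [IsFiniteMeasure p]
    (h : p.real Set.univ ≤ μ.real Set.univ) : 0 ≤ KL μ p := by
  by_cases hfin : μ ≪ p ∧ Integrable (llr μ p) μ
  · rw [KL_of_ac_of_integrable hfin.1 hfin.2, EReal.coe_nonneg]
    linarith [InformationTheory.integral_llr_add_sub_measure_univ_nonneg hfin.1 hfin.2]
  · rw [KL_of_not_ac_and_integrable hfin]
    exact le_top

lemma llr_add_ae_eq_left [SigmaFinite μ] [SigmaFinite ν] [SigmaFinite p]
    (hsing : μ ⟂ₘ ν) (hac : μ ≪ p) : llr (μ + ν) p =ᵐ[μ] llr μ p := by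
  filter_upwards [hac.ae_le (Measure.rnDeriv_add' μ ν p),
    Measure.rnDeriv_eq_zero_of_mutuallySingular hsing.symm hac] with x hadd hzero
  simp only [llr_def, hadd, Pi.add_apply, hzero, Pi.zero_apply, add_zero]

lemma llr_add_ae_eq_right [SigmaFinite μ] [SigmaFinite ν] [SigmaFinite p]
    (hsing : μ ⟂ₘ ν) (hac : ν ≪ p) : llr (μ + ν) p =ᵐ[ν] llr ν p := by
  rw [add_comm]
  exact llr_add_ae_eq_left hsing.symm hac

lemma ac_and_integrable_llr_add_iff [SigmaFinite μ] [SigmaFinite ν] [SigmaFinite p]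
    (hsing : μ ⟂ₘ ν) :
    (μ + ν ≪ p ∧ Integrable (llr (μ + ν) p) (μ + ν)) ↔
      (μ ≪ p ∧ Integrable (llr μ p) μ) ∧ (ν ≪ p ∧ Integrable (llr ν p) ν) := by
  rw [Measure.AbsolutelyContinuous.add_left_iff, and_and_and_comm, integrable_add_measure]
  refine and_congr_right fun ⟨hμ, hν⟩ => ?_
  rw [integrable_congr (llr_add_ae_eq_left hsing hμ),
    integrable_congr (llr_add_ae_eq_right hsing hν)]

theorem KL_add_of_mutuallySingular [SigmaFinite μ] [SigmaFinite ν] [SigmaFinite p]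
    (hsing : μ ⟂ₘ ν) : KL (μ + ν) p = KL μ p + KL ν p := by
  have hiff := ac_and_integrable_llr_add_iff (p := p) hsing
  by_cases hμ : μ ≪ p ∧ Integrable (llr μ p) μ
  · by_cases hν : ν ≪ p ∧ Integrable (llr ν p) ν
    · obtain ⟨hac, hint⟩ := hiff.2 ⟨hμ, hν⟩
      rw [KL_of_ac_of_integrable hac hint, KL_of_ac_of_integrable hμ.1 hμ.2,
        KL_of_ac_of_integrable hν.1 hν.2, ← EReal.coe_add,
        integral_add_measure hint.left_of_add_measure hint.right_of_add_measure,
        integral_congr_ae (llr_add_ae_eq_left hsing hμ.1),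
        integral_congr_ae (llr_add_ae_eq_right hsing hν.1)]
    · rw [KL_of_not_ac_and_integrable fun h => hν (hiff.1 h).2, KL_of_not_ac_and_integrable hν,
        EReal.add_top_of_ne_bot (KL_ne_bot μ p)]
  · rw [KL_of_not_ac_and_integrable fun h => hμ (hiff.1 h).1, KL_of_not_ac_and_integrable hμ,
      EReal.top_add_of_ne_bot (KL_ne_bot ν p)]

lemma mutuallySingular_finsetSum_right {ι : Type*} {s : Finset ι} {μs : ι → Measure X}
    (h : ∀ i ∈ s, μ ⟂ₘ μs i) : μ ⟂ₘ ∑ i ∈ s, μs i := by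
  rw [← Measure.sum_coe_finset, Measure.MutuallySingular.sum_right]
  exact fun i => h i i.2

theorem KL_finsetSum_of_pairwise_mutuallySingular {ι : Type*} {s : Finset ι}
    {μs : ι → Measure X} [∀ i, IsFiniteMeasure (μs i)] [SigmaFinite p]
    (hsing : (s : Set ι).Pairwise fun i j => μs i ⟂ₘ μs j) :
    KL (∑ i ∈ s, μs i) p = ∑ i ∈ s, KL (μs i) p := by
  classical
  induction s using Finset.induction_on with
  | empty => simp only [Finset.sum_empty, KL_zero_left]
  | insert a s ha ih =>
    have hsing_sum : μs a ⟂ₘ ∑ i ∈ s, μs i :=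
      mutuallySingular_finsetSum_right fun i hi =>
        hsing (Finset.mem_insert_self a s) (Finset.mem_insert_of_mem hi)
          (ne_of_mem_of_not_mem hi ha).symm
    rw [Finset.sum_insert ha, Finset.sum_insert ha, KL_add_of_mutuallySingular hsing_sum,
      ih (hsing.mono (Finset.coe_subset.2 (Finset.subset_insert a s)))]

theorem KL_ofReal_smul_left [IsFiniteMeasure μ] [SigmaFinite p] {c : ℝ} (hc : 0 < c) :
    KL (ENNReal.ofReal c • μ) p = c * KL μ p + (c * Real.log c * μ.real Set.univ : ℝ) := by
  have hc_ne_zero : ENNReal.ofReal c ≠ 0 := (ENNReal.ofReal_pos.2 hc).ne'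
  have hac_iff : ENNReal.ofReal c • μ ≪ p ↔ μ ≪ p :=
    ⟨(Measure.absolutelyContinuous_smul hc_ne_zero).trans, fun h => h.smul_left _⟩
  by_cases hac : μ ≪ p
  swap
  · rw [KL_of_not_ac_and_integrable fun h => hac (hac_iff.1 h.1),
      KL_of_not_ac_and_integrable fun h => hac h.1, EReal.coe_mul_top_of_pos hc,
      EReal.top_add_coe]
  have hllr : llr (ENNReal.ofReal c • μ) p =ᵐ[μ] fun x => llr μ p x + Real.log c := by
    simpa only [ENNReal.toReal_ofReal hc.le] using
      llr_smul_left hac _ hc_ne_zero ENNReal.ofReal_ne_top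
  have hint_iff : Integrable (llr (ENNReal.ofReal c • μ) p) (ENNReal.ofReal c • μ) ↔
      Integrable (llr μ p) μ := by
    rw [integrable_smul_measure hc_ne_zero ENNReal.ofReal_ne_top, integrable_congr hllr,
      integrable_add_const_iff]
  by_cases hint : Integrable (llr μ p) μ
  · rw [KL_of_ac_of_integrable (hac_iff.2 hac) (hint_iff.2 hint),
      KL_of_ac_of_integrable hac hint, ← EReal.coe_mul, ← EReal.coe_add, integral_smul_measure,
      integral_congr_ae hllr, integral_add hint (integrable_const _), integral_const,
      ENNReal.toReal_ofReal hc.le, smul_eq_mul, smul_eq_mul]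
    congr 1
    ring
  · rw [KL_of_not_ac_and_integrable fun h => hint (hint_iff.1 h.2),
      KL_of_not_ac_and_integrable fun h => hint h.2, EReal.coe_mul_top_of_pos hc,
      EReal.top_add_coe]

lemma mul_KL_sub_eq [IsProbabilityMeasure μ] [SigmaFinite p] {c : ℝ} (hc : 0 < c) (r : ℝ) :
    c * (KL μ p - r) = KL (ENNReal.ofReal c • μ) p + (-(c * Real.log c) - c * r : ℝ) := by
  rw [KL_ofReal_smul_left hc, probReal_univ, mul_one, add_assoc, ← EReal.coe_add,
    EReal.mul_sub_of_nonneg_of_ne_top (EReal.coe_nonneg.2 hc.le) (EReal.coe_ne_top c),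
    ← EReal.coe_mul, sub_eq_add_neg, ← EReal.coe_neg]
  congr 2
  ring

end KL

lemma coe_finsetSum_eReal {ι : Type*} (s : Finset ι) (f : ι → ℝ) :
    ((∑ i ∈ s, f i : ℝ) : EReal) = ∑ i ∈ s, (f i : EReal) :=
  map_sum (⟨⟨Real.toEReal, EReal.coe_zero⟩, EReal.coe_add⟩ : ℝ →+ EReal) f s

lemma one_add_sum_pos {ι : Type*} [Fintype ι] {w : ι → ℝ} (hw : ∀ i, 0 ≤ w i) :
    0 < 1 + ∑ i, w i :=
  add_pos_of_pos_of_nonneg one_pos (Finset.sum_nonneg fun i _ => hw i)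

section Mixture

variable {X : Type*} [MeasurableSpace X] {m : ℕ} {q0 : Measure X} {qi : Fin m → Measure X}
  {b l : Fin m → ℝ}

lemma ofReal_smul_qMix (hS : 0 < 1 + ∑ i, l i) :
    ENNReal.ofReal (1 + ∑ i, l i) • qMix q0 qi l = q0 + ∑ i, ENNReal.ofReal (l i) • qi i := by
  rw [qMix, smul_smul, ENNReal.mul_inv_cancel (ENNReal.ofReal_pos.2 hS).ne'
    ENNReal.ofReal_ne_top, one_smul]

lemma isProbabilityMeasure_qMix [IsProbabilityMeasure q0] [∀ i, IsProbabilityMeasure (qi i)]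
    (hl : ∀ i, 0 ≤ l i) : IsProbabilityMeasure (qMix q0 qi l) where
  measure_univ := by
    have hS : ENNReal.ofReal (1 + ∑ i, l i) = 1 + ∑ i, ENNReal.ofReal (l i) := by
      rw [ENNReal.ofReal_add zero_le_one (Finset.sum_nonneg fun i _ => hl i), ENNReal.ofReal_one,
        ENNReal.ofReal_sum_of_nonneg fun i _ => hl i]
    simp only [qMix, Measure.smul_apply, Measure.add_apply, Measure.finsetSum_apply,
      measure_univ, smul_eq_mul, mul_one]
    rw [← hS]
    exact ENNReal.inv_mul_cancel (ENNReal.ofReal_pos.2 (one_add_sum_pos hl)).ne'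
      ENNReal.ofReal_ne_top

theorem Lagrangian_eq_KL_add [SigmaFinite q0] [∀ i, IsProbabilityMeasure (qi i)]
    {p : Measure X} [SigmaFinite p] (hsing0 : ∀ i, q0 ⟂ₘ qi i)
    (hsing : Pairwise fun i j => qi i ⟂ₘ qi j) (hl : ∀ i, 0 < l i) :
    Lagrangian q0 qi b p l = KL (q0 + ∑ i, ENNReal.ofReal (l i) • qi i) p +
      (-∑ i, l i * Real.log (l i) - ∑ i, l i * b i : ℝ) := by
  have (i : Fin m) : IsFiniteMeasure (ENNReal.ofReal (l i) • qi i) :=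
    Measure.smul_finite _ ENNReal.ofReal_ne_top
  have hsmul_sing : Pairwise fun i j =>
      ENNReal.ofReal (l i) • qi i ⟂ₘ ENNReal.ofReal (l j) • qi j :=
    fun i j hij => (((hsing hij).smul _).symm.smul _).symm
  rw [KL_add_of_mutuallySingular
      (mutuallySingular_finsetSum_right fun i _ => ((hsing0 i).symm.smul _).symm),
    KL_finsetSum_of_pairwise_mutuallySingular (hsmul_sing.set_pairwise _), Lagrangian, add_assoc,
    ← Finset.sum_neg_distrib, ← Finset.sum_sub_distrib, coe_finsetSum_eReal,
    ← Finset.sum_add_distrib]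
  simp only [mul_KL_sub_eq (hl _)]

theorem Lagrangian_eq_mul_KL_qMix_add [IsProbabilityMeasure q0]
    [∀ i, IsProbabilityMeasure (qi i)] {p : Measure X} [SigmaFinite p]
    (hsing0 : ∀ i, q0 ⟂ₘ qi i) (hsing : Pairwise fun i j => qi i ⟂ₘ qi j)
    (hl : ∀ i, 0 < l i) :
    Lagrangian q0 qi b p l = (1 + ∑ i, l i : ℝ) * KL (qMix q0 qi l) p +
      ((1 + ∑ i, l i) * Real.log (1 + ∑ i, l i)
        - ∑ i, l i * Real.log (l i) - ∑ i, l i * b i : ℝ) := by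
  have hS : 0 < 1 + ∑ i, l i := one_add_sum_pos fun i => (hl i).le
  have := isProbabilityMeasure_qMix (q0 := q0) (qi := qi) fun i => (hl i).le
  rw [Lagrangian_eq_KL_add hsing0 hsing hl, ← ofReal_smul_qMix hS, KL_ofReal_smul_left hS,
    probReal_univ, mul_one, add_assoc, ← EReal.coe_add]
  congr 2
  ring

end Mixture

/-- for pairwise mutually singular probability measures `q⁰, q¹, …, qᵐ` and
`λ` with strictly positive entries, the dual function has the closed form
`g(λ) = (1 + ∑ᵢ λᵢ) log(1 + ∑ᵢ λᵢ) − ∑ᵢ λᵢ log λᵢ − ∑ᵢ λᵢ bᵢ`, and the infimum defining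
`g(λ)` is attained at the mixture `q_mix^{(λ)}`. -/
theorem stmt7 {X : Type*} [MeasurableSpace X] {m : ℕ}
    (q0 : Measure X) [IsProbabilityMeasure q0]
    (qi : Fin m → Measure X) (hqi : ∀ i, IsProbabilityMeasure (qi i))
    (hsing0 : ∀ i, q0 ⟂ₘ qi i)
    (hsing : Pairwise fun i j => qi i ⟂ₘ qi j)
    (b : Fin m → ℝ) (l : Fin m → ℝ) (hl : ∀ i, 0 < l i) :
    dualFn q0 qi b l
      = (((1 + ∑ i, l i) * Real.log (1 + ∑ i, l i)
          - ∑ i, l i * Real.log (l i) - ∑ i, l i * b i : ℝ) : EReal) ∧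
    Lagrangian q0 qi b (qMix q0 qi l) l = dualFn q0 qi b l := by
  have hprob : IsProbabilityMeasure (qMix q0 qi l) :=
    isProbabilityMeasure_qMix fun i => (hl i).le
  have hmix := Lagrangian_eq_mul_KL_qMix_add (b := b) (p := qMix q0 qi l) hsing0 hsing hl
  rw [KL_self, mul_zero, zero_add] at hmix
  suffices hdual : dualFn q0 qi b l = Lagrangian q0 qi b (qMix q0 qi l) l from
    ⟨hdual.trans hmix, hdual.symm⟩
  refine le_antisymm (iInf_le_of_le ⟨qMix q0 qi l, hprob⟩ le_rfl) (le_iInf fun ⟨p, hp⟩ => ?_)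
  have hKL : 0 ≤ KL (qMix q0 qi l) p :=
    KL_nonneg_of_measureReal_univ_le (by simp only [probReal_univ, le_rfl])
  have hS : (0 : EReal) ≤ (1 + ∑ i, l i : ℝ) :=
    EReal.coe_nonneg.2 (one_add_sum_pos fun i => (hl i).le).le
  rw [hmix, Lagrangian_eq_mul_KL_qMix_add hsing0 hsing hl]
  exact le_add_of_nonneg_left (mul_nonneg hS hKL)
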